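/- Let Γ be a finite extensive-form game with perfect recall. A behavioral strategy profile β* is a Nash equilibrium in behavioral strategies if and only if there exist a behavioral strategy profile β̃*, a belief system μ*, and multipliers λ*, λ̃*, ζ*, ζ̃* such that (β*, β̃*, μ*, λ*, λ̃*, ζ*, ζ̃*) solves the system: ω(I_i^j|β) u^i(a, ϱ^i_{I_i^j}(β^{-I_i^j}, β̃), μ | I_i^j) + λ^i_{I_i^j}(a) − ζ^i_{I_i^j} = 0 and u^i(a, ϱ^i_{I_i^j}(β^{-I_i^j}, β̃), μ | I_i^j) + λ̃^i_{I_i^j}(a) − ζ̃^i_{I_i^j} = 0 for all i ∈ N, j ∈ M_i, a ∈ A(I_i^j); S^i(I_i^j|β) μ^i_{I_i^j}(h) = S^i(h|β) and μ^i_{I_i^j}(h) ≥ 0 for all i, j, h ∈ I_i^j; Σ_{h ∈ I_i^j} μ^i_{I_i^j}(h) = 1, Σ_{a ∈ A(I_i^j)} β^i_{I_i^j}(a) = 1, Σ_{a ∈ A(I_i^j)} β̃^i_{I_i^j}(a) = 1 for all i, j; β^i_{I_i^j}(a) λ^i_{I_i^j}(a) = 0, β̃^i_{I_i^j}(a) λ̃^i_{I_i^j}(a)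 = 0, and β^i_{I_i^j}(a) ≥ 0, λ^i_{I_i^j}(a) ≥ 0, β̃^i_{I_i^j}(a) ≥ 0, λ̃^i_{I_i^j}(a) ≥ 0 for all i, j, a ∈ A(I_i^j). -/

import Mathlib

open scoped Classical

noncomputable section

/-- A finite extensive-form game.  Actions are labelled by natural numbers drawn from the
finite pool `actFinset`; a history is the list of actions taken so far; players are `Fin n`
and `P h = none` means that the chance player moves after `h`.  The information sets of
player `i` are `Info i j` for `j < m i`, and `infoIdx h` is the index of the information
set containing a nonterminal history `h` at which some player moves.  Payoffs `u i h` are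
relevant on terminal histories. -/
structure EFG where
  n : ℕ
  actFinset : Finset ℕ
  H : Finset (List ℕ)
  P : List ℕ → Option (Fin n)
  fc : List ℕ → ℕ → ℝ
  m : Fin n → ℕ
  Info : Fin n → ℕ → Finset (List ℕ)
  infoIdx : List ℕ → ℕ
  u : Fin n → List ℕ → ℝ
  empty_mem : ([] : List ℕ) ∈ H
  prefixClosed : ∀ h ∈ H, ∀ h' : List ℕ, h' <+: h → h' ∈ H
  act_mem : ∀ (h : List ℕ) (a : ℕ), h ++ [a] ∈ H → a ∈ actFinset
  fc_nonneg : ∀ h a, 0 ≤ fc h a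
  fc_sum : ∀ h ∈ H, P h = none → (∃ a, h ++ [a] ∈ H) →
    ∑ a ∈ actFinset.filter (fun a => h ++ [a] ∈ H), fc h a = 1
  info_spec : ∀ (i : Fin n) (j : ℕ) (h : List ℕ), j < m i →
    (h ∈ Info i j ↔ h ∈ H ∧ P h = some i ∧ (∃ a, h ++ [a] ∈ H) ∧ infoIdx h = j)
  infoIdx_lt : ∀ (i : Fin n), ∀ h ∈ H, P h = some i → (∃ a, h ++ [a] ∈ H) → infoIdx h < m i
  info_nonempty : ∀ (i : Fin n) (j : ℕ), j < m i → (Info i j).Nonempty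
  info_actions : ∀ (i : Fin n) (j : ℕ), j < m i → ∀ h ∈ Info i j, ∀ h' ∈ Info i j,
    ∀ a : ℕ, (h ++ [a] ∈ H ↔ h' ++ [a] ∈ H)
  act_unique : ∀ (h h' : List ℕ) (a : ℕ), h ∈ H → h' ∈ H → h ++ [a] ∈ H → h' ++ [a] ∈ H →
    P h = P h' ∧ infoIdx h = infoIdx h'

namespace EFG

/-- Behavioral strategy profiles (player, information-set index, action ↦ probability). -/
abbrev Profile (G : EFG) : Type := Fin G.n → ℕ → ℕ → ℝ

/-- Belief systems (player, information-set index, history ↦ probability). -/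
abbrev Belief (G : EFG) : Type := Fin G.n → ℕ → List ℕ → ℝ

variable (G : EFG)

/-- The set `Z` of terminal histories. -/
def Zset : Finset (List ℕ) := G.H.filter fun h => ∀ a : ℕ, h ++ [a] ∉ G.H

/-- The set `A(h)` of actions available after a history. -/
def A (h : List ℕ) : Finset ℕ := G.actFinset.filter fun a => h ++ [a] ∈ G.H

/-- The common action set `A(I_i^j)` of an information set. -/
def infoA (i : Fin G.n) (j : ℕ) : Finset ℕ := (G.Info i j).sup fun h => G.A h

/-- A behavioral strategy of player `i`: a probability distribution on `A(I_i^j)` for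
each information set `I_i^j`. -/
def IsBehStrategy (i : Fin G.n) (b : ℕ → ℕ → ℝ) : Prop :=
  ∀ j < G.m i, (∀ a ∈ G.infoA i j, 0 ≤ b j a) ∧ ∑ a ∈ G.infoA i j, b j a = 1

/-- A behavioral strategy profile. -/
def IsBehProfile (β : G.Profile) : Prop := ∀ i : Fin G.n, G.IsBehStrategy i (β i)

/-- The probability of action `a` at history `h`: the chance distribution if the chance
player moves, and the mover's behavioral strategy otherwise. -/
def moveProb (β : G.Profile) (h : List ℕ) (a : ℕ) : ℝ :=
  (G.P h).elim (G.fc h a) fun i => β i (G.infoIdx h) a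

/-- Player `i`'s record `X_i` of the information sets he encounters along a history and the
actions he takes at them, accumulated starting from the prefix `pre`. -/
def recordFrom (i : Fin G.n) : List ℕ → List ℕ → List (ℕ × ℕ)
  | _, [] => []
  | pre, b :: rest =>
    (if G.P pre = some i then [(G.infoIdx pre, b)] else []) ++ recordFrom i (pre ++ [b]) rest

/-- Perfect recall. -/
def PerfectRecall : Prop :=
  ∀ (i : Fin G.n) (j : ℕ), j < G.m i →
    ∀ h ∈ G.Info i j, ∀ h' ∈ G.Info i j, G.recordFrom i [] h = G.recordFrom i [] h'

/-- Product of the move probabilities along `rest`, continuing from the prefix `pre`. -/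
def prodAlong (β : G.Profile) : List ℕ → List ℕ → ℝ
  | _, [] => 1
  | pre, b :: rest => G.moveProb β pre b * prodAlong β (pre ++ [b]) rest

/-- `ω(h|β)`: the probability that the moves along `h` are played under `β`. -/
def omega (β : G.Profile) (h : List ℕ) : ℝ := G.prodAlong β [] h

/-- `ω(I_i^j|β)`. -/
def omegaInfo (i : Fin G.n) (j : ℕ) (β : G.Profile) : ℝ := ∑ h ∈ G.Info i j, G.omega β h

/-- Product of the move probabilities along `rest` from `pre`, disregarding player `i`'s
own moves. -/
def prodAlongNot (i : Fin G.n) (β : G.Profile) : List ℕ → List ℕ → ℝ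
  | _, [] => 1
  | pre, b :: rest =>
    (if G.P pre = some i then 1 else G.moveProb β pre b) * prodAlongNot i β (pre ++ [b]) rest

/-- `S^i(h|β)`: probability of the moves along `h`, disregarding player `i`'s own moves. -/
def Sh (i : Fin G.n) (β : G.Profile) (h : List ℕ) : ℝ := G.prodAlongNot i β [] h

/-- `S^i(I_i^j|β)`. -/
def SInfo (i : Fin G.n) (j : ℕ) (β : G.Profile) : ℝ := ∑ h ∈ G.Info i j, G.Sh i β h

/-- Product of the move probabilities along `rest` from `pre`, with the factor at prefixes
lying in `I_i^j` omitted. -/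
def prodAlongSkip (i : Fin G.n) (j : ℕ) (β : G.Profile) : List ℕ → List ℕ → ℝ
  | _, [] => 1
  | pre, b :: rest =>
    (if pre ∈ G.Info i j then 1 else G.moveProb β pre b) * prodAlongSkip i j β (pre ++ [b]) rest

/-- `q ∈ M(a, I_i^j)`: `I_i^q` is a first information set of player `i` after action `a`
(every history in `I_i^q` contains `a`, with no later action of `a` lying in any action set
of player `i`). -/
def FirstAfter (i : Fin G.n) (a : ℕ) (q : ℕ) : Prop :=
  q < G.m i ∧ ∀ h ∈ G.Info i q, ∃ l₁ l₂ : List ℕ,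
    h = l₁ ++ a :: l₂ ∧ ∀ b ∈ l₂, ∀ p < G.m i, b ∉ G.infoA i p

/-- `q ∈ M(I_i^j) = ∪_{a ∈ A(I_i^j)} M(a, I_i^j)`. -/
def MInfo (i : Fin G.n) (j : ℕ) (q : ℕ) : Prop := ∃ a ∈ G.infoA i j, G.FirstAfter i a q

/-- `q ∈ Λ(a, I_i^j)`: every history in `I_i^q` contains the action `a`. -/
def LambdaSet (i : Fin G.n) (a : ℕ) (q : ℕ) : Prop :=
  q < G.m i ∧ ∀ h ∈ G.Info i q, ∃ l₁ l₂ : List ℕ, h = l₁ ++ a :: l₂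

/-- `ϱ^i_{I_i^j}(β, β̃)`: replace player `i`'s component of `β` by that of `β̃` at every
information set `I_i^q` such that some history in `I_i^q` contains an action of `A(I_i^j)`. -/
def rho (i : Fin G.n) (j : ℕ) (β βt : G.Profile) : G.Profile := fun p q =>
  if p = i ∧ ∃ h ∈ G.Info i q, ∃ b ∈ h, b ∈ G.infoA i j then βt i q else β p q

/-- A belief system: a probability distribution on each information set. -/
def IsBelief (μ : G.Belief) : Prop :=
  ∀ (i : Fin G.n) (j : ℕ), j < G.m i →
    (∀ h ∈ G.Info i j, 0 ≤ μ i j h) ∧ ∑ h ∈ G.Info i j, μ i j h = 1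

/-- A self-independent belief system for `β`:
`S^i(I_i^j|β) · μ^i_{I_i^j}(h) = S^i(h|β)`. -/
def SelfIndep (β : G.Profile) (μ : G.Belief) : Prop :=
  ∀ (i : Fin G.n) (j : ℕ), j < G.m i → ∀ h ∈ G.Info i j,
    G.SInfo i j β * μ i j h = G.Sh i β h

/-- Auxiliary for `ν`: scan `rest` from `pre` for the subhistory lying in `I_i^j`, then
weight by the belief and multiply the move probabilities of the remaining moves (the move
taken at the subhistory itself being skipped). -/
def nuAux (i : Fin G.n) (j : ℕ) (β : G.Profile) (w : List ℕ → ℝ) : List ℕ → List ℕ → ℝ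
  | _, [] => 0
  | pre, b :: rest =>
    if pre ∈ G.Info i j then w pre * G.prodAlong β (pre ++ [b]) rest
    else nuAux i j β w (pre ++ [b]) rest

/-- `ν^i_{I_i^j}(h | a, β^{-I_i^j}, μ)` (it does not involve the component of `β` at
`I_i^j`). -/
def nu (i : Fin G.n) (j : ℕ) (β : G.Profile) (μ : G.Belief) (h : List ℕ) : ℝ :=
  G.nuAux i j β (μ i j) [] h

/-- `u^i((a, β^{-I_i^j}) ∧ I_i^j)`. -/
def uWedgeAct (i : Fin G.n) (j : ℕ) (a : ℕ) (β : G.Profile) : ℝ :=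
  ∑ h ∈ G.Zset.filter (fun h => a ∈ h), G.u i h * G.prodAlongSkip i j β [] h

/-- `u^i(β ∧ I_i^j)`. -/
def uWedge (i : Fin G.n) (j : ℕ) (β : G.Profile) : ℝ :=
  ∑ h ∈ G.Zset.filter (fun h => ∃ b ∈ h, b ∈ G.infoA i j), G.u i h * G.omega β h

/-- The conditional expected payoff `u^i(a, β^{-I_i^j}, μ | I_i^j)`. -/
def uCond (i : Fin G.n) (j : ℕ) (a : ℕ) (β : G.Profile) (μ : G.Belief) : ℝ :=
  ∑ h ∈ G.Zset.filter (fun h => a ∈ h), G.u i h * G.nu i j β μ h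

/-- The expected payoff `u^i(β)`. -/
def uExp (i : Fin G.n) (β : G.Profile) : ℝ := ∑ h ∈ G.Zset, G.u i h * G.omega β h

/-- The profile obtained from `β` by replacing all of player `i`'s components by `b`. -/
def replace (β : G.Profile) (i : Fin G.n) (b : ℕ → ℕ → ℝ) : G.Profile :=
  fun p => if p = i then b else β p

/-- `β` is a Nash equilibrium in behavioral strategies. -/
def IsNash (β : G.Profile) : Prop :=
  G.IsBehProfile β ∧ ∀ (i : Fin G.n) (b : ℕ → ℕ → ℝ), G.IsBehStrategy i b →
    G.uExp i (G.replace β i b) ≤ G.uExp i β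

/-- `(β, β̃, μ)` satisfies the Nash characterization (Definition 2 of the paper). -/
def NashChar (β βt : G.Profile) (μ : G.Belief) : Prop :=
  (∀ (i : Fin G.n) (j : ℕ), j < G.m i → ∀ a' ∈ G.infoA i j, ∀ a'' ∈ G.infoA i j,
    G.uWedgeAct i j a' (G.rho i j β βt) < G.uWedgeAct i j a'' (G.rho i j β βt) →
    β i j a' = 0) ∧
  (∀ (i : Fin G.n) (j : ℕ), j < G.m i → ∀ a' ∈ G.infoA i j, ∀ a'' ∈ G.infoA i j,
    G.uCond i j a' (G.rho i j β βt) μ < G.uCond i j a'' (G.rho i j β βt) μ →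
    βt i j a' = 0) ∧
  G.IsBelief μ ∧ G.SelfIndep β μ

/-- `r` is the root of a subgame: every information set lies entirely inside or entirely
outside the set of histories extending `r`. -/
def IsSubgameRoot (r : List ℕ) : Prop :=
  r ∈ G.H ∧ ∀ (i : Fin G.n) (j : ℕ), j < G.m i →
    (∀ h ∈ G.Info i j, r <+: h) ∨ ∀ h ∈ G.Info i j, ¬ r <+: h

/-- The depth `g` of the smallest subgame containing `A(I_i^j)` (the length of the longest
subgame root preceding every history of `I_i^j`). -/
def sgDepthInfo (i : Fin G.n) (j : ℕ) : ℕ :=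
  (G.H.filter fun r => G.IsSubgameRoot r ∧ ∀ h ∈ G.Info i j, r <+: h).sup List.length

/-- The depth `q(h)` of the smallest subgame containing the last action of `h`. -/
def sgDepthHist (h : List ℕ) : ℕ :=
  (G.H.filter fun r => G.IsSubgameRoot r ∧ r <+: h.dropLast).sup List.length

/-- `C^i_{I_i^j}(h|β)`: product of move probabilities along `h` within the smallest subgame
containing `A(I_i^j)`. -/
def Ch (i : Fin G.n) (j : ℕ) (β : G.Profile) (h : List ℕ) : ℝ :=
  G.prodAlong β (h.take (G.sgDepthInfo i j)) (h.drop (G.sgDepthInfo i j))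

/-- `C^i_{I_i^j}(I_i^j|β)`. -/
def CInfo (i : Fin G.n) (j : ℕ) (β : G.Profile) : ℝ := ∑ h ∈ G.Info i j, G.Ch i j β h

/-- `u^i((a, β^{-I_i^j}) ⋄ I_i^j)`. -/
def uDiamondAct (i : Fin G.n) (j : ℕ) (a : ℕ) (β : G.Profile) : ℝ :=
  ∑ h ∈ G.Zset.filter (fun h => a ∈ h), G.u i h *
    G.prodAlongSkip i j β (h.take (G.sgDepthInfo i j)) (h.drop (G.sgDepthInfo i j))

/-- `Y^i(h|β)`: like `S^i(h|β)` but within the smallest subgame containing the last action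
of `h`. -/
def Yh (i : Fin G.n) (β : G.Profile) (h : List ℕ) : ℝ :=
  G.prodAlongNot i β (h.take (G.sgDepthHist h)) (h.drop (G.sgDepthHist h))

/-- `Y^i(I_i^j|β)`. -/
def YInfo (i : Fin G.n) (j : ℕ) (β : G.Profile) : ℝ := ∑ h ∈ G.Info i j, G.Yh i β h

/-- The belief condition `Y^i(I_i^j|β) · μ^i_{I_i^j}(h) = Y^i(h|β)`. -/
def YConsistent (β : G.Profile) (μ : G.Belief) : Prop :=
  ∀ (i : Fin G.n) (j : ℕ), j < G.m i → ∀ h ∈ G.Info i j,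
    G.YInfo i j β * μ i j h = G.Yh i β h

/-- The expected payoff of player `i` in the subgame rooted at `r` (payoffs of terminal
histories extending `r`, weighted by the move probabilities within the subgame). -/
def uExpFrom (i : Fin G.n) (β : G.Profile) (r : List ℕ) : ℝ :=
  ∑ h ∈ G.Zset.filter (fun h => r <+: h), G.u i h * G.prodAlong β r (h.drop r.length)

/-- `β` is a subgame perfect equilibrium in behavioral strategies: its restriction to every
subgame is a Nash equilibrium in behavioral strategies of that subgame. -/
def IsSubgamePerfect (β : G.Profile) : Prop :=
  G.IsBehProfile β ∧ ∀ r : List ℕ, G.IsSubgameRoot r →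
    ∀ (i : Fin G.n) (b : ℕ → ℕ → ℝ), G.IsBehStrategy i b →
      G.uExpFrom i (G.replace β i b) r ≤ G.uExpFrom i β r

/-- `(β, β̃, μ)` satisfies the subgame perfect characterization (Definition 6 of the
paper). -/
def SubgameChar (β βt : G.Profile) (μ : G.Belief) : Prop :=
  (∀ (i : Fin G.n) (j : ℕ), j < G.m i → ∀ a' ∈ G.infoA i j, ∀ a'' ∈ G.infoA i j,
    G.uDiamondAct i j a' (G.rho i j β βt) < G.uDiamondAct i j a'' (G.rho i j β βt) →
    β i j a' = 0) ∧
  (∀ (i : Fin G.n) (j : ℕ), j < G.m i → ∀ a' ∈ G.infoA i j, ∀ a'' ∈ G.infoA i j,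
    G.uCond i j a' (G.rho i j β βt) μ < G.uCond i j a'' (G.rho i j β βt) μ →
    βt i j a' = 0) ∧
  G.IsBelief μ ∧ G.YConsistent β μ

/-- `(β, μ)` is a semi-sequential equilibrium. -/
def SemiSeqEq (β : G.Profile) (μ : G.Belief) : Prop :=
  G.IsBehProfile β ∧ G.IsBelief μ ∧ G.SelfIndep β μ ∧
  ∀ (i : Fin G.n) (j : ℕ), j < G.m i → ∀ a' ∈ G.infoA i j, ∀ a'' ∈ G.infoA i j,
    G.uCond i j a' β μ < G.uCond i j a'' β μ → β i j a' = 0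

/-- `(β, μ)` is a subgame perfect semi-sequential equilibrium. -/
def SubgameSemiSeqEq (β : G.Profile) (μ : G.Belief) : Prop :=
  G.IsBehProfile β ∧ G.IsBelief μ ∧ G.YConsistent β μ ∧
  ∀ (i : Fin G.n) (j : ℕ), j < G.m i → ∀ a' ∈ G.infoA i j, ∀ a'' ∈ G.infoA i j,
    G.uCond i j a' β μ < G.uCond i j a'' β μ → β i j a' = 0

/-- `d(I_i^j)`: the number of information sets of player `i` containing a prefix of some
history of `I_i^j` (counting `I_i^j` itself). -/
def dInfo (i : Fin G.n) (j : ℕ) : ℕ :=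
  ((Finset.range (G.m i)).filter
    (fun q => ∃ h ∈ G.Info i j, ∃ p : List ℕ, p <+: h ∧ p ∈ G.Info i q)).card

end EFG

namespace EFG

/-- Product of player's own move probabilities along a record. -/
def own (b : ℕ → ℕ → ℝ) (r : List (ℕ × ℕ)) : ℝ := (r.map fun p => b p.1 p.2).prod

/-- Telescoping coefficient. -/
def tel (b c : ℕ → ℕ → ℝ) (x : ℕ × ℕ) : List (ℕ × ℕ) → ℝ
  | [] => 0
  | y :: r => if y = x then own c r else b y.1 y.2 * tel b c x r

theorem own_cons (b : ℕ → ℕ → ℝ) (x : ℕ × ℕ) (r : List (ℕ × ℕ)) :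
    own b (x :: r) = b x.1 x.2 * own b r := by simp [own]

theorem own_append (b : ℕ → ℕ → ℝ) (r s : List (ℕ × ℕ)) :
    own b (r ++ s) = own b r * own b s := by simp [own]

theorem tel_notMem (b c : ℕ → ℕ → ℝ) (x : ℕ × ℕ) (r : List (ℕ × ℕ)) (h : x ∉ r) :
    tel b c x r = 0 := by
  induction r with
  | nil => rfl
  | cons y r ih =>
    simp only [List.mem_cons, not_or] at h
    simp [tel, Ne.symm h.1, ih h.2]

theorem tel_split (b c : ℕ → ℕ → ℝ) (x : ℕ × ℕ) (r s : List (ℕ × ℕ)) (h : x ∉ r) :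
    tel b c x (r ++ x :: s) = own b r * own c s := by
  induction r with
  | nil => simp [tel, own]
  | cons y r ih =>
    simp only [List.mem_cons, not_or] at h
    simp [tel, Ne.symm h.1, ih h.2, own_cons, mul_assoc]

theorem own_sub (b c : ℕ → ℕ → ℝ) (T : Finset (ℕ × ℕ)) (r : List (ℕ × ℕ)) (hn : r.Nodup)
    (hT : ∀ x ∈ r, x ∈ T) :
    own b r - own c r = ∑ x ∈ T, (b x.1 x.2 - c x.1 x.2) * tel b c x r := by
  induction r with
  | nil => simp [own, tel]
  | cons y r ih =>
    have hy := (List.nodup_cons.1 hn).1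
    have h1 := ih (List.nodup_cons.1 hn).2 (fun x hx => hT x (List.mem_cons_of_mem _ hx))
    have hyT := hT y (List.mem_cons_self)
    have h2 : ∀ x ∈ T, (b x.1 x.2 - c x.1 x.2) * tel b c x (y :: r) =
        b y.1 y.2 * ((b x.1 x.2 - c x.1 x.2) * tel b c x r) +
        (if y = x then (b y.1 y.2 - c y.1 y.2) * own c r else 0) := by
      intro x _
      by_cases hxy : y = x
      · subst hxy
        simp [tel, tel_notMem b c y r hy]
      · simp [tel, hxy]; ring
    rw [Finset.sum_congr rfl h2, Finset.sum_add_distrib, ← Finset.mul_sum, ← h1,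
      Finset.sum_ite_eq, if_pos hyT, own_cons, own_cons]
    ring

variable (G : EFG)

theorem prodAlong_replace (i : Fin G.n) (β : G.Profile) (b : ℕ → ℕ → ℝ) (pre rest : List ℕ) :
    G.prodAlong (G.replace β i b) pre rest =
      G.prodAlongNot i β pre rest * own b (G.recordFrom i pre rest) := by
  induction rest generalizing pre with
  | nil => simp [prodAlong, prodAlongNot, recordFrom, own]
  | cons a rest ih =>
    simp only [prodAlong, prodAlongNot, recordFrom, ih, own_append]
    by_cases hp : G.P pre = some i
    · simp [hp, moveProb, replace, own]; ring
    · have : G.moveProb (G.replace β i b) pre a = G.moveProb β pre a := by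
        unfold moveProb
        cases hq : G.P pre with
        | none => rfl
        | some k =>
          have : k ≠ i := by rintro rfl; exact hp hq
          simp [replace, this]
      simp [hp, this, own]; ring

theorem replace_self (i : Fin G.n) (β : G.Profile) : G.replace β i (β i) = β := by
  funext p; unfold replace; split_ifs with h
  · rw [h]
  · rfl

theorem recordFrom_append (i : Fin G.n) (pre s t : List ℕ) :
    G.recordFrom i pre (s ++ t) = G.recordFrom i pre s ++ G.recordFrom i (pre ++ s) t := by
  induction s generalizing pre with
  | nil => simp [recordFrom]
  | cons a s ih => simp [recordFrom, ih]

theorem prodAlongNot_append (i : Fin G.n) (β : G.Profile) (pre s t : List ℕ) :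
    G.prodAlongNot i β pre (s ++ t) =
      G.prodAlongNot i β pre s * G.prodAlongNot i β (pre ++ s) t := by
  induction s generalizing pre with
  | nil => simp [prodAlongNot]
  | cons a s ih => simp [prodAlongNot, ih, mul_assoc]

theorem mem_record (i : Fin G.n) (x : ℕ × ℕ) (pre rest : List ℕ)
    (h : x ∈ G.recordFrom i pre rest) :
    ∃ s t, rest = s ++ x.2 :: t ∧ G.P (pre ++ s) = some i ∧ G.infoIdx (pre ++ s) = x.1 := by
  induction rest generalizing pre with
  | nil => simp [recordFrom] at h
  | cons a rest ih =>
    simp only [recordFrom, List.mem_append] at h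
    rcases h with h | h
    · by_cases hp : G.P pre = some i
      · simp [hp] at h
        subst h
        exact ⟨[], rest, by simp, by simpa using hp, by simp⟩
      · simp [hp] at h
    · obtain ⟨s, t, h1, h2, h3⟩ := ih _ h
      exact ⟨a :: s, t, by simp [h1], by simpa using h2, by simpa using h3⟩

theorem mem_H_left {s t : List ℕ} (h : s ++ t ∈ G.H) : s ∈ G.H :=
  G.prefixClosed _ h _ (List.prefix_append _ _)

theorem mem_H_step {s t : List ℕ} {a : ℕ} (h : s ++ a :: t ∈ G.H) : s ++ [a] ∈ G.H :=
  G.prefixClosed _ h _ ⟨t, by simp⟩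

theorem mem_Info_of (i : Fin G.n) {s t : List ℕ} {a : ℕ} (h : s ++ a :: t ∈ G.H)
    (hp : G.P s = some i) : G.infoIdx s < G.m i ∧ s ∈ G.Info i (G.infoIdx s) := by
  have h1 := G.mem_H_left h
  have h2 : ∃ a, s ++ [a] ∈ G.H := ⟨a, G.mem_H_step h⟩
  have h3 := G.infoIdx_lt i s h1 hp h2
  exact ⟨h3, (G.info_spec i _ s h3).2 ⟨h1, hp, h2, rfl⟩⟩

theorem mem_infoA (i : Fin G.n) (j : ℕ) (a : ℕ) :
    a ∈ G.infoA i j ↔ ∃ h ∈ G.Info i j, h ++ [a] ∈ G.H := by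
  unfold infoA A
  rw [Finset.mem_sup]
  constructor
  · rintro ⟨h, h1, h2⟩
    exact ⟨h, h1, (Finset.mem_filter.1 h2).2⟩
  · rintro ⟨h, h1, h2⟩
    exact ⟨h, h1, Finset.mem_filter.2 ⟨G.act_mem _ _ h2, h2⟩⟩

theorem split_mem_Info (i : Fin G.n) (j : ℕ) (hj : j < G.m i) {a : ℕ} (ha : a ∈ G.infoA i j)
    {s t : List ℕ} (h : s ++ a :: t ∈ G.H) :
    s ∈ G.Info i j ∧ G.P s = some i ∧ G.infoIdx s = j := by
  obtain ⟨p, hp, hpa⟩ := (G.mem_infoA i j a).1 ha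
  have hs := (G.info_spec i j p hj).1 hp
  have h1 := G.act_unique p s a hs.1 (G.mem_H_left h) hpa (G.mem_H_step h)
  have h2 : G.P s = some i := by rw [← h1.1]; exact hs.2.1
  have h3 : G.infoIdx s = j := by rw [← h1.2]; exact hs.2.2.2
  have h4 := (G.mem_Info_of i h h2).2
  rw [h3] at h4
  exact ⟨h4, h2, h3⟩

theorem not_both (hPR : G.PerfectRecall) (i : Fin G.n) (j : ℕ) (hj : j < G.m i)
    (s t : List ℕ) (a : ℕ) (h1 : s ∈ G.Info i j) (h2 : s ++ a :: t ∈ G.Info i j) : False := by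
  have h := hPR i j hj _ h1 _ h2
  have hp := ((G.info_spec i j s hj).1 h1).2.1
  rw [recordFrom_append] at h
  have h := congrArg List.length h
  simp [recordFrom, hp] at h

theorem notMem_record (hPR : G.PerfectRecall) (i : Fin G.n) (j : ℕ) (hj : j < G.m i)
    (a : ℕ) (h : List ℕ) (hh : h ∈ G.Info i j) : (j, a) ∉ G.recordFrom i [] h := by
  intro hm
  obtain ⟨s, t, h1, h2, h3⟩ := G.mem_record i _ _ _ hm
  simp only [List.nil_append] at h2 h3
  have hH := ((G.info_spec i j h hj).1 hh).1
  rw [h1] at hH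
  have h4 := (G.mem_Info_of i hH h2).2
  rw [h3] at h4
  rw [h1] at hh
  exact G.not_both hPR i j hj s t a h4 hh

theorem record_nodup (hPR : G.PerfectRecall) (i : Fin G.n) (h : List ℕ) (hh : h ∈ G.H) :
    (G.recordFrom i [] h).Nodup := by
  induction h using List.reverseRecOn with
  | nil => simp [recordFrom]
  | append_singleton h a ih =>
    have ih := ih (G.mem_H_left hh)
    rw [recordFrom_append]
    by_cases hp : G.P h = some i
    · have h1 := G.mem_Info_of i hh hp
      have h2 := G.notMem_record hPR i _ h1.1 a h h1.2
      simp only [recordFrom, List.nil_append, hp, if_true, List.append_nil]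
      rw [List.nodup_append]
      refine ⟨ih, by simp, ?_⟩
      intro x hx y hy
      simp at hy
      subst hy
      rintro rfl
      exact h2 hx
    · simpa [recordFrom, hp] using ih

theorem prodAlongNot_nonneg (i : Fin G.n) (β : G.Profile) (hβ : G.IsBehProfile β)
    (pre rest : List ℕ) (hh : pre ++ rest ∈ G.H) : 0 ≤ G.prodAlongNot i β pre rest := by
  induction rest generalizing pre with
  | nil => simp [prodAlongNot]
  | cons a rest ih =>
    refine mul_nonneg ?_ (ih _ (by simpa using hh))
    split_ifs with hp
    · exact zero_le_one
    · unfold moveProb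
      cases hq : G.P pre with
      | none => exact G.fc_nonneg _ _
      | some k =>
        have h1 := G.mem_Info_of k hh hq
        exact (hβ k _ h1.1).1 a ((G.mem_infoA _ _ _).2 ⟨pre, h1.2, G.mem_H_step hh⟩)

theorem own_nonneg (i : Fin G.n) (b : ℕ → ℕ → ℝ) (hb : G.IsBehStrategy i b)
    (h : List ℕ) (hh : h ∈ G.H) : 0 ≤ own b (G.recordFrom i [] h) := by
  unfold own
  apply List.prod_nonneg
  intro x hx
  obtain ⟨y, hy, rfl⟩ := List.mem_map.1 hx
  obtain ⟨s, t, h1, h2, h3⟩ := G.mem_record i _ _ _ hy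
  simp only [List.nil_append] at h2 h3
  rw [h1] at hh
  have h4 := G.mem_Info_of i hh h2
  rw [h3] at h4
  exact (hb _ h4.1).1 _ ((G.mem_infoA _ _ _).2 ⟨s, h4.2, G.mem_H_step hh⟩)

theorem nuAux_append (i : Fin G.n) (j : ℕ) (β : G.Profile) (w : List ℕ → ℝ)
    (pre s t : List ℕ) (a : ℕ) (hin : pre ++ s ∈ G.Info i j)
    (hno : ∀ (s' t' : List ℕ) (a' : ℕ), s = s' ++ a' :: t' → pre ++ s' ∉ G.Info i j) :
    G.nuAux i j β w pre (s ++ a :: t) =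
      w (pre ++ s) * G.prodAlong β (pre ++ s ++ [a]) t := by
  induction s generalizing pre with
  | nil =>
    rw [List.append_nil] at hin
    simp [nuAux, hin]
  | cons c s ih =>
    have h0 : pre ∉ G.Info i j := by simpa using hno [] s c (by simp)
    rw [List.cons_append, nuAux, if_neg h0, ih (pre ++ [c]) (by simpa using hin)]
    · simp
    · intro s' t' a' h
      simpa using hno (c :: s') t' a' (by simp [h])

theorem prodAlong_rho (i : Fin G.n) (j : ℕ) (β βt : G.Profile) (a : ℕ)
    (ha : a ∈ G.infoA i j) (pre rest : List ℕ) (hpre : a ∈ pre) (hH : pre ++ rest ∈ G.H) :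
    G.prodAlong (G.rho i j β βt) pre rest = G.prodAlong (G.replace β i (βt i)) pre rest := by
  induction rest generalizing pre with
  | nil => rfl
  | cons c rest ih =>
    simp only [prodAlong]
    rw [ih (pre ++ [c]) (by simp [hpre]) (by simpa using hH)]
    congr 1
    unfold moveProb
    cases hq : G.P pre with
    | none => rfl
    | some k =>
      simp only [Option.elim_some, rho, replace]
      by_cases hk : k = i
      · subst hk
        have h1 := G.mem_Info_of k hH hq
        rw [if_pos ⟨rfl, pre, h1.2, a, hpre, ha⟩, if_pos rfl]
      · rw [if_neg (by tauto), if_neg hk]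

/-- Record of player `i` at an information set. -/
def recOf (i : Fin G.n) (j : ℕ) : List (ℕ × ℕ) :=
  if h : (G.Info i j).Nonempty then G.recordFrom i [] h.choose else []

theorem recOf_eq (hPR : G.PerfectRecall) (i : Fin G.n) (j : ℕ) (hj : j < G.m i) (h : List ℕ)
    (hh : h ∈ G.Info i j) : G.recOf i j = G.recordFrom i [] h := by
  have hne : (G.Info i j).Nonempty := ⟨h, hh⟩
  unfold recOf
  rw [dif_pos hne]
  exact hPR i j hj _ hne.choose_spec _ hh

theorem key_term (hPR : G.PerfectRecall) (i : Fin G.n) (j : ℕ) (hj : j < G.m i)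
    (β βt : G.Profile) (μ : G.Belief) (hμ : G.SelfIndep β μ) (b : ℕ → ℕ → ℝ) (a : ℕ)
    (ha : a ∈ G.infoA i j) (z : List ℕ) (hz : z ∈ G.H) (haz : a ∈ z) :
    G.Sh i β z * tel b (βt i) (j, a) (G.recordFrom i [] z) =
      own b (G.recOf i j) * G.SInfo i j β * G.nu i j (G.rho i j β βt) μ z := by
  obtain ⟨p, s, rfl⟩ := List.append_of_mem haz
  obtain ⟨h1, h2, h3⟩ := G.split_mem_Info i j hj ha hz
  have hrec : G.recordFrom i [] (p ++ a :: s) =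
      G.recordFrom i [] p ++ (j, a) :: G.recordFrom i (p ++ [a]) s := by
    rw [recordFrom_append]; simp [recordFrom, h2, h3]
  have hS : G.Sh i β (p ++ a :: s) = G.Sh i β p * G.prodAlongNot i β (p ++ [a]) s := by
    unfold Sh; rw [prodAlongNot_append]; simp [prodAlongNot, h2]
  have hnu : G.nu i j (G.rho i j β βt) μ (p ++ a :: s) =
      μ i j p * G.prodAlong (G.rho i j β βt) (p ++ [a]) s := by
    unfold nu
    rw [nuAux_append _ _ _ _ _ _ _ _ _ (by simpa using h1)]
    · simp
    · intro s' t' a' hp hin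
      rw [List.nil_append] at hin
      rw [hp] at h1
      exact G.not_both hPR i j hj _ _ _ hin h1
  rw [hrec, tel_split _ _ _ _ _ (G.notMem_record hPR i j hj a p h1), hS, hnu,
    prodAlong_rho G i j β βt a ha _ _ (by simp) (by simpa using hz), prodAlong_replace,
    G.recOf_eq hPR i j hj p h1, ← hμ i j hj p h1]
  ring

theorem perf_diff (hPR : G.PerfectRecall) (i : Fin G.n)
    (β βt : G.Profile) (μ : G.Belief) (hμ : G.SelfIndep β μ) (b : ℕ → ℕ → ℝ) :
    G.uExp i (G.replace β i b) - G.uExp i (G.replace β i (βt i)) =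
      ∑ j ∈ Finset.range (G.m i), own b (G.recOf i j) * G.SInfo i j β *
        ∑ a ∈ G.infoA i j, (b j a - βt i j a) * G.uCond i j a (G.rho i j β βt) μ := by
  have hterm : ∀ z ∈ G.Zset, G.u i z * G.omega (G.replace β i b) z -
      G.u i z * G.omega (G.replace β i (βt i)) z =
      ∑ j ∈ Finset.range (G.m i), ∑ a ∈ G.infoA i j,
        (if a ∈ z then own b (G.recOf i j) * G.SInfo i j β * ((b j a - βt i j a) *
          (G.u i z * G.nu i j (G.rho i j β βt) μ z)) else 0) := by
    intro z hz
    have hzH : z ∈ G.H := (Finset.mem_filter.1 hz).1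
    have hmemT : ∀ p : ℕ × ℕ,
        p ∈ ((Finset.range (G.m i)) ×ˢ G.actFinset).filter (fun p => p.2 ∈ G.infoA i p.1) ↔
        p.1 ∈ Finset.range (G.m i) ∧ p.2 ∈ G.infoA i p.1 := by
      intro p
      simp only [Finset.mem_filter, Finset.mem_product]
      constructor
      · tauto
      · rintro ⟨h1, h2⟩
        obtain ⟨h, _, hh⟩ := (G.mem_infoA _ _ _).1 h2
        exact ⟨⟨h1, G.act_mem _ _ hh⟩, h2⟩
    have hsub := own_sub b (βt i)
      (((Finset.range (G.m i)) ×ˢ G.actFinset).filter (fun p => p.2 ∈ G.infoA i p.1))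
      (G.recordFrom i [] z) (G.record_nodup hPR i z hzH) (by
        intro x hx
        rw [hmemT]
        obtain ⟨s, t, h1, h2, h3⟩ := G.mem_record i _ _ _ hx
        simp only [List.nil_append] at h2 h3
        rw [h1] at hzH
        have h4 := G.mem_Info_of i hzH h2
        rw [h3] at h4
        exact ⟨Finset.mem_range.2 h4.1, (G.mem_infoA _ _ _).2 ⟨s, h4.2, G.mem_H_step hzH⟩⟩)
    rw [Finset.sum_finset_product _ _ _ hmemT] at hsub
    have : G.u i z * G.omega (G.replace β i b) z -
        G.u i z * G.omega (G.replace β i (βt i)) z =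
        G.u i z * G.Sh i β z *
          (own b (G.recordFrom i [] z) - own (βt i) (G.recordFrom i [] z)) := by
      unfold omega Sh
      rw [prodAlong_replace, prodAlong_replace]; ring
    rw [this, hsub, Finset.mul_sum]
    refine Finset.sum_congr rfl fun j hj => ?_
    rw [Finset.mul_sum]
    refine Finset.sum_congr rfl fun a ha => ?_
    split_ifs with haz
    · have hk := G.key_term hPR i j (Finset.mem_range.1 hj) β βt μ hμ b a ha z hzH haz
      linear_combination (G.u i z * (b j a - βt i j a)) * hk
    · rw [tel_notMem]
      · ring
      · intro hm
        obtain ⟨s, t, h1, -⟩ := G.mem_record i _ _ _ hm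
        apply haz
        rw [h1]; simp
  unfold uExp
  rw [← Finset.sum_sub_distrib, Finset.sum_congr rfl hterm, Finset.sum_comm]
  refine Finset.sum_congr rfl fun j hj => ?_
  rw [Finset.sum_comm, Finset.mul_sum]
  refine Finset.sum_congr rfl fun a ha => ?_
  unfold uCond
  rw [← Finset.sum_filter, Finset.mul_sum, Finset.mul_sum]

theorem omegaInfo_eq (hPR : G.PerfectRecall) (i : Fin G.n) (j : ℕ) (hj : j < G.m i)
    (β : G.Profile) : G.omegaInfo i j β = own (β i) (G.recOf i j) * G.SInfo i j β := by
  unfold omegaInfo SInfo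
  rw [Finset.mul_sum]
  refine Finset.sum_congr rfl fun h hh => ?_
  rw [G.recOf_eq hPR i j hj h hh]
  unfold omega Sh
  have := G.prodAlong_replace i β (β i) [] h
  rw [replace_self] at this
  rw [this]; ring

theorem SInfo_nonneg (i : Fin G.n) (j : ℕ) (hj : j < G.m i)
    (β : G.Profile) (hβ : G.IsBehProfile β) : 0 ≤ G.SInfo i j β :=
  Finset.sum_nonneg fun h hh => G.prodAlongNot_nonneg i β hβ _ _
    (by simpa using ((G.info_spec i j h hj).1 hh).1)

theorem own_recOf_nonneg (hPR : G.PerfectRecall) (i : Fin G.n) (j : ℕ) (hj : j < G.m i)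
    (b : ℕ → ℕ → ℝ) (hb : G.IsBehStrategy i b) : 0 ≤ own b (G.recOf i j) := by
  obtain ⟨h, hh⟩ := G.info_nonempty i j hj
  rw [G.recOf_eq hPR i j hj h hh]
  exact G.own_nonneg i b hb h ((G.info_spec i j h hj).1 hh).1

theorem exists_belief (β : G.Profile) (hβ : G.IsBehProfile β) :
    ∃ μ : G.Belief, G.IsBelief μ ∧ G.SelfIndep β μ := by
  have hSh : ∀ (i : Fin G.n) (j : ℕ), j < G.m i → ∀ h ∈ G.Info i j, 0 ≤ G.Sh i β h := by
    intro i j hj h hh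
    exact G.prodAlongNot_nonneg i β hβ _ _ (by simpa using ((G.info_spec i j h hj).1 hh).1)
  refine ⟨fun i j h => if G.SInfo i j β = 0 then 1 / ((G.Info i j).card : ℝ)
    else G.Sh i β h / G.SInfo i j β, ?_, ?_⟩
  · intro i j hj
    have hne := G.info_nonempty i j hj
    by_cases h0 : G.SInfo i j β = 0
    · simp only [h0, if_true]
      refine ⟨fun h hh => by positivity, ?_⟩
      rw [Finset.sum_const, nsmul_eq_mul]
      have : ((G.Info i j).card : ℝ) ≠ 0 := by
        exact_mod_cast (Finset.card_pos.2 hne).ne'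
      field_simp
    · simp only [h0, if_false]
      refine ⟨fun h hh => div_nonneg (hSh i j hj h hh) (G.SInfo_nonneg i j hj β hβ), ?_⟩
      rw [← Finset.sum_div]
      exact div_self h0
  · intro i j hj h hh
    by_cases h0 : G.SInfo i j β = 0
    · rw [h0, zero_mul]
      exact ((Finset.sum_eq_zero_iff_of_nonneg (hSh i j hj)).1 h0 h hh).symm
    · simp only [h0, if_false]
      field_simp

/-- Depth of an information set. -/
def dep (i : Fin G.n) (j : ℕ) : ℕ :=
  (G.Info i j).sup fun h => (G.recordFrom i [] h).length

theorem dep_lt (hPR : G.PerfectRecall) (i : Fin G.n) (j q : ℕ) (hj : j < G.m i) (hq : q < G.m i)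
    (hh : ∃ h ∈ G.Info i q, ∃ b ∈ h, b ∈ G.infoA i j) : G.dep i j < G.dep i q := by
  obtain ⟨h, h1, a, h2, h3⟩ := hh
  have hle : (G.recordFrom i [] h).length ≤ G.dep i q :=
    Finset.le_sup (f := fun h => (G.recordFrom i [] h).length) h1
  have hH := ((G.info_spec i q h hq).1 h1).1
  obtain ⟨p, s, rfl⟩ := List.append_of_mem h2
  obtain ⟨h4, h5, h6⟩ := G.split_mem_Info i j hj h3 hH
  have hd : G.dep i j ≤ (G.recordFrom i [] p).length := by
    apply Finset.sup_le
    intro h' hh'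
    rw [hPR i j hj _ hh' _ h4]
  rw [recordFrom_append] at hle
  simp [recordFrom, h5] at hle
  omega

theorem exists_opt (hPR : G.PerfectRecall) (β : G.Profile) (hβ : G.IsBehProfile β)
    (μ : G.Belief) :
    ∃ βt : G.Profile, G.IsBehProfile βt ∧ ∀ (i : Fin G.n) (j : ℕ), j < G.m i →
      ∃ a₀ ∈ G.infoA i j, βt i j = Pi.single a₀ 1 ∧ ∀ a ∈ G.infoA i j,
        G.uCond i j a (G.rho i j β βt) μ ≤ G.uCond i j a₀ (G.rho i j β βt) μ := by
  obtain ⟨D, hD⟩ : ∃ D, ∀ (i : Fin G.n) (j : ℕ), j < G.m i → G.dep i j < D := by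
    refine ⟨(Finset.univ.sup fun i : Fin G.n => (Finset.range (G.m i)).sup (G.dep i)) + 1, ?_⟩
    intro i j hj
    have h1 : G.dep i j ≤ (Finset.range (G.m i)).sup (G.dep i) :=
      Finset.le_sup (Finset.mem_range.2 hj)
    have h2 := Finset.le_sup (f := fun i : Fin G.n => (Finset.range (G.m i)).sup (G.dep i))
      (Finset.mem_univ i)
    exact Nat.lt_succ_of_le (h1.trans h2)
  have main : ∀ k : ℕ, ∃ βt : G.Profile, G.IsBehProfile βt ∧
      ∀ (i : Fin G.n) (j : ℕ), j < G.m i → D ≤ G.dep i j + k →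
      ∃ a₀ ∈ G.infoA i j, βt i j = Pi.single a₀ 1 ∧ ∀ a ∈ G.infoA i j,
        G.uCond i j a (G.rho i j β βt) μ ≤ G.uCond i j a₀ (G.rho i j β βt) μ := by
    intro k
    induction k with
    | zero =>
      refine ⟨β, hβ, fun i j hj h => ?_⟩
      have := hD i j hj
      omega
    | succ k ih =>
      obtain ⟨βt, hb, hopt⟩ := ih
      have hmax : ∀ (i : Fin G.n) (j : ℕ), ∃ a₀, j < G.m i → a₀ ∈ G.infoA i j ∧
          ∀ a ∈ G.infoA i j,
          G.uCond i j a (G.rho i j β βt) μ ≤ G.uCond i j a₀ (G.rho i j β βt) μ := by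
        intro i j
        by_cases hj : j < G.m i
        · obtain ⟨h, hh⟩ := G.info_nonempty i j hj
          obtain ⟨a, ha⟩ := ((G.info_spec i j h hj).1 hh).2.2.1
          obtain ⟨a₀, h1, h2⟩ := Finset.exists_max_image (G.infoA i j)
            (fun a => G.uCond i j a (G.rho i j β βt) μ)
            ⟨a, (G.mem_infoA _ _ _).2 ⟨h, hh, ha⟩⟩
          exact ⟨a₀, fun _ => ⟨h1, h2⟩⟩
        · exact ⟨0, fun h => absurd h hj⟩
      choose am ham using hmax
      let βn : G.Profile := fun i j =>
        if j < G.m i ∧ G.dep i j + (k + 1) = D then Pi.single (am i j) 1 else βt i j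
      have hrho : ∀ (i : Fin G.n) (j : ℕ), j < G.m i → D ≤ G.dep i j + (k + 1) →
          G.rho i j β βn = G.rho i j β βt := by
        intro i j hj hd
        funext p q
        unfold rho
        split_ifs with hc
        · have : ¬ (q < G.m i ∧ G.dep i q + (k + 1) = D) := by
            rintro ⟨hq, hqd⟩
            have := G.dep_lt hPR i j q hj hq hc.2
            omega
          simp only [βn, if_neg this]
        · rfl
      refine ⟨βn, ?_, ?_⟩
      · intro i j hj
        by_cases hd : G.dep i j + (k + 1) = D
        · have : βn i j = Pi.single (am i j) 1 := by simp only [βn, if_pos (And.intro hj hd)]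
          rw [this]
          refine ⟨fun a _ => ?_, ?_⟩
          · rw [Pi.single_apply]; split_ifs <;> norm_num
          · simp only [Pi.single_apply]; rw [Finset.sum_ite_eq', if_pos (ham i j hj).1]
        · have : βn i j = βt i j := by
            simp only [βn]; rw [if_neg (by tauto)]
          rw [this]
          exact hb i j hj
      · intro i j hj hd
        rw [hrho i j hj hd]
        by_cases hd' : G.dep i j + (k + 1) = D
        · exact ⟨am i j, (ham i j hj).1, by simp only [βn, if_pos (And.intro hj hd')],
            (ham i j hj).2⟩
        · have : βn i j = βt i j := by
            simp only [βn]; rw [if_neg (by tauto)]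
          rw [this]
          exact hopt i j hj (by omega)
  obtain ⟨βt, h1, h2⟩ := main D
  exact ⟨βt, h1, fun i j hj => h2 i j hj (by omega)⟩

end EFG

/-- Corollary 1: `β*` is a Nash equilibrium in behavioral strategies iff the polynomial
system (13), using conditional expected payoffs, is solvable. -/
theorem stmt7 (G : EFG) (hPR : G.PerfectRecall) (β : G.Profile) (hβ : G.IsBehProfile β) :
    G.IsNash β ↔
      ∃ (βt : G.Profile) (μ : G.Belief) (lam lamt : Fin G.n → ℕ → ℕ → ℝ)
        (ze zet : Fin G.n → ℕ → ℝ),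
        (∀ (i : Fin G.n) (j : ℕ), j < G.m i → ∀ a ∈ G.infoA i j,
          G.omegaInfo i j β * G.uCond i j a (G.rho i j β βt) μ + lam i j a - ze i j = 0) ∧
        (∀ (i : Fin G.n) (j : ℕ), j < G.m i → ∀ a ∈ G.infoA i j,
          G.uCond i j a (G.rho i j β βt) μ + lamt i j a - zet i j = 0) ∧
        (∀ (i : Fin G.n) (j : ℕ), j < G.m i → ∀ h ∈ G.Info i j,
          G.SInfo i j β * μ i j h = G.Sh i β h ∧ 0 ≤ μ i j h) ∧
        (∀ (i : Fin G.n) (j : ℕ), j < G.m i →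
          (∑ h ∈ G.Info i j, μ i j h = 1) ∧ (∑ a ∈ G.infoA i j, β i j a = 1) ∧
          (∑ a ∈ G.infoA i j, βt i j a = 1)) ∧
        (∀ (i : Fin G.n) (j : ℕ), j < G.m i → ∀ a ∈ G.infoA i j,
          β i j a * lam i j a = 0 ∧ βt i j a * lamt i j a = 0 ∧
          0 ≤ β i j a ∧ 0 ≤ lam i j a ∧ 0 ≤ βt i j a ∧ 0 ≤ lamt i j a) := by
  constructor
  · rintro ⟨-, hN⟩
    obtain ⟨μ, hμ, hSI⟩ := G.exists_belief β hβ
    obtain ⟨βt, hβt, hopt⟩ := G.exists_opt hPR β hβ μ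
    have hmax : ∀ (i : Fin G.n) (j : ℕ), ∃ a₀, j < G.m i → a₀ ∈ G.infoA i j ∧
        βt i j = Pi.single a₀ 1 ∧ ∀ a ∈ G.infoA i j,
        G.uCond i j a (G.rho i j β βt) μ ≤ G.uCond i j a₀ (G.rho i j β βt) μ := by
      intro i j
      by_cases hj : j < G.m i
      · obtain ⟨a₀, h⟩ := hopt i j hj
        exact ⟨a₀, fun _ => h⟩
      · exact ⟨0, fun h => absurd h hj⟩
    choose am ham using hmax
    have hom : ∀ (i : Fin G.n) (j : ℕ), j < G.m i → 0 ≤ G.omegaInfo i j β := by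
      intro i j hj
      rw [G.omegaInfo_eq hPR i j hj]
      exact mul_nonneg (G.own_recOf_nonneg hPR i j hj _ (hβ i)) (G.SInfo_nonneg i j hj β hβ)
    have hlam : ∀ (i : Fin G.n) (j : ℕ), j < G.m i → ∀ a ∈ G.infoA i j,
        0 ≤ G.omegaInfo i j β * (G.uCond i j (am i j) (G.rho i j β βt) μ -
          G.uCond i j a (G.rho i j β βt) μ) := fun i j hj a ha =>
      mul_nonneg (hom i j hj) (sub_nonneg.2 ((ham i j hj).2.2 a ha))
    have hzero : ∀ (i : Fin G.n) (j : ℕ), j < G.m i → ∀ a ∈ G.infoA i j,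
        β i j a * (G.omegaInfo i j β * (G.uCond i j (am i j) (G.rho i j β βt) μ -
          G.uCond i j a (G.rho i j β βt) μ)) = 0 := by
      intro i
      have hpd := G.perf_diff hPR i β βt μ hSI (β i)
      rw [EFG.replace_self] at hpd
      have hge := hN i (βt i) (hβt i)
      have heq : ∀ j ∈ Finset.range (G.m i), EFG.own (β i) (G.recOf i j) * G.SInfo i j β *
          ∑ a ∈ G.infoA i j, (β i j a - βt i j a) * G.uCond i j a (G.rho i j β βt) μ =
          - ∑ a ∈ G.infoA i j, β i j a * (G.omegaInfo i j β *
            (G.uCond i j (am i j) (G.rho i j β βt) μ -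
              G.uCond i j a (G.rho i j β βt) μ)) := by
        intro j hj
        have hj := Finset.mem_range.1 hj
        rw [← G.omegaInfo_eq hPR i j hj]
        have h1 : ∑ a ∈ G.infoA i j, βt i j a * G.uCond i j a (G.rho i j β βt) μ =
            G.uCond i j (am i j) (G.rho i j β βt) μ := by
          rw [(ham i j hj).2.1]
          rw [Finset.sum_eq_single_of_mem (am i j) (ham i j hj).1]
          · simp
          · intro b _ hb
            simp [hb]
        have h2 := (hβ i j hj).2
        simp only [sub_mul, mul_sub, Finset.sum_sub_distrib]
        rw [h1, ← Finset.sum_mul, h2]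
        have h3 : ∑ a ∈ G.infoA i j, β i j a * (G.omegaInfo i j β *
            G.uCond i j a (G.rho i j β βt) μ) = G.omegaInfo i j β *
            ∑ a ∈ G.infoA i j, β i j a * G.uCond i j a (G.rho i j β βt) μ := by
          rw [Finset.mul_sum]
          exact Finset.sum_congr rfl fun a _ => by ring
        rw [h3]; ring
      rw [Finset.sum_congr rfl heq, Finset.sum_neg_distrib] at hpd
      have hnn : ∀ j ∈ Finset.range (G.m i), 0 ≤ ∑ a ∈ G.infoA i j, β i j a *
          (G.omegaInfo i j β * (G.uCond i j (am i j) (G.rho i j β βt) μ -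
              G.uCond i j a (G.rho i j β βt) μ)) := fun j hj =>
        Finset.sum_nonneg fun a ha => mul_nonneg ((hβ i j (Finset.mem_range.1 hj)).1 a ha)
          (hlam i j (Finset.mem_range.1 hj) a ha)
      have hs := le_antisymm (by linarith) (Finset.sum_nonneg hnn)
      intro j hj a ha
      have h4 := (Finset.sum_eq_zero_iff_of_nonneg hnn).1 hs j (Finset.mem_range.2 hj)
      exact (Finset.sum_eq_zero_iff_of_nonneg (fun a ha => mul_nonneg ((hβ i j hj).1 a ha)
          (hlam i j hj a ha))).1 h4 a ha
    refine ⟨βt, μ, fun i j a => G.omegaInfo i j β *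
        (G.uCond i j (am i j) (G.rho i j β βt) μ - G.uCond i j a (G.rho i j β βt) μ),
      fun i j a => G.uCond i j (am i j) (G.rho i j β βt) μ - G.uCond i j a (G.rho i j β βt) μ,
      fun i j => G.omegaInfo i j β * G.uCond i j (am i j) (G.rho i j β βt) μ,
      fun i j => G.uCond i j (am i j) (G.rho i j β βt) μ, ?_, ?_, ?_, ?_, ?_⟩
    · intro i j _ a _; ring
    · intro i j _ a _; ring
    · exact fun i j hj h hh => ⟨hSI i j hj h hh, (hμ i j hj).1 h hh⟩
    · exact fun i j hj => ⟨(hμ i j hj).2, (hβ i j hj).2, (hβt i j hj).2⟩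
    · intro i j hj a ha
      refine ⟨hzero i j hj a ha, ?_, (hβ i j hj).1 a ha, hlam i j hj a ha, (hβt i j hj).1 a ha,
        sub_nonneg.2 ((ham i j hj).2.2 a ha)⟩
      rw [(ham i j hj).2.1]
      by_cases h : a = am i j
      · simp [h]
      · simp [h]
  · rintro ⟨βt, μ, lam, lamt, ze, zet, h1, h2, h3, h4, h5⟩
    refine ⟨hβ, fun i b hb => ?_⟩
    have hSI : G.SelfIndep β μ := fun i j hj h hh => (h3 i j hj h hh).1
    have e1 := G.perf_diff hPR i β βt μ hSI b
    have e2 := G.perf_diff hPR i β βt μ hSI (β i)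
    rw [EFG.replace_self] at e2
    have i1 : G.uExp i (G.replace β i b) - G.uExp i (G.replace β i (βt i)) ≤ 0 := by
      rw [e1]
      refine Finset.sum_nonpos fun j hj => ?_
      have hj := Finset.mem_range.1 hj
      refine mul_nonpos_of_nonneg_of_nonpos (mul_nonneg
        (G.own_recOf_nonneg hPR i j hj b hb) (G.SInfo_nonneg i j hj β hβ)) ?_
      have : ∀ a ∈ G.infoA i j, (b j a - βt i j a) * G.uCond i j a (G.rho i j β βt) μ =
          b j a * zet i j - βt i j a * zet i j - b j a * lamt i j a := by
        intro a ha
        linear_combination (b j a - βt i j a) * h2 i j hj a ha + (h5 i j hj a ha).2.1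
      rw [Finset.sum_congr rfl this, Finset.sum_sub_distrib, Finset.sum_sub_distrib,
        ← Finset.sum_mul, ← Finset.sum_mul, (hb j hj).2, (h4 i j hj).2.2]
      have : 0 ≤ ∑ a ∈ G.infoA i j, b j a * lamt i j a := Finset.sum_nonneg fun a ha =>
        mul_nonneg ((hb j hj).1 a ha) (h5 i j hj a ha).2.2.2.2.2
      linarith
    have i2 : 0 ≤ G.uExp i β - G.uExp i (G.replace β i (βt i)) := by
      rw [e2]
      refine Finset.sum_nonneg fun j hj => ?_
      have hj := Finset.mem_range.1 hj
      rw [← G.omegaInfo_eq hPR i j hj, Finset.mul_sum]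
      have : ∀ a ∈ G.infoA i j, G.omegaInfo i j β *
          ((β i j a - βt i j a) * G.uCond i j a (G.rho i j β βt) μ) =
          β i j a * ze i j - βt i j a * ze i j + βt i j a * lam i j a := by
        intro a ha
        linear_combination (β i j a - βt i j a) * h1 i j hj a ha - (h5 i j hj a ha).1
      rw [Finset.sum_congr rfl this, Finset.sum_add_distrib, Finset.sum_sub_distrib,
        ← Finset.sum_mul, ← Finset.sum_mul, (hβ i j hj).2, (h4 i j hj).2.2]
      have : 0 ≤ ∑ a ∈ G.infoA i j, βt i j a * lam i j a := Finset.sum_nonneg fun a ha =>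
        mul_nonneg (h5 i j hj a ha).2.2.2.2.1 (h5 i j hj a ha).2.2.2.1
      linarith
    linarith
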